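/- Let (ρ, u) be a smooth solution of (QNS_ε) on (0,T) × T^d, let c ∈ (0, μ), and set v = u + c ∇(φ_ε(ρ)), λ̃ = (μ − c)/μ, κ̃² = c² − 2νc + κ². Then for every t ∈ (0,T): (d/dt) ∫_{T^d} [ ρ|v|²/2 + ρ^γ/(γ−1) + λ̃ f_ε(ρ) + 2κ̃² |h_ε'(ρ)∇√ρ|² ] dx + c ∫ h_ε(ρ)|Av|² + (2ν−c) ∫ ( h_ε(ρ)|Dv|² + g_ε(ρ)(div v)² ) + ∫ p̃_ε(ρ)|v|² + cγ ∫ h_ε'(ρ)|∇ρ|² ρ^{γ−2} + c λ̃ ∫ h_ε'(ρ)|∇ρ|² f_ε''(ρ) + c κ̃² ∫ h_ε(ρ)|∇²(φ_ε(ρ))|² + c κ̃² ∫ g_ε(ρ)(Δ(φ_ε(ρ)))² = 0, all spatial integrals being over T^d. -/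

import Mathlib

open MeasureTheory Real

noncomputable section

/-- Partial derivative of a scalar field in the coordinate direction `i`. -/
def pd {d : ℕ} (i : Fin d) (f : (Fin d → ℝ) → ℝ) (x : Fin d → ℝ) : ℝ :=
  fderiv ℝ f x (Pi.single i 1)

/-- Gradient of a scalar field. -/
def grad {d : ℕ} (f : (Fin d → ℝ) → ℝ) (x : Fin d → ℝ) : Fin d → ℝ :=
  fun i => pd i f x

/-- Divergence of a vector field. -/
def dvg {d : ℕ} (u : (Fin d → ℝ) → (Fin d → ℝ)) (x : Fin d → ℝ) : ℝ :=
  ∑ i, pd i (fun y => u y i) x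

/-- Row-wise divergence of a matrix field: `(dvgM M x) i = ∑ j, ∂_j M_{ij}`. -/
def dvgM {d : ℕ} (M : (Fin d → ℝ) → Fin d → Fin d → ℝ) (x : Fin d → ℝ) : Fin d → ℝ :=
  fun i => ∑ j, pd j (fun y => M y i j) x

/-- Hessian of a scalar field. -/
def hess {d : ℕ} (f : (Fin d → ℝ) → ℝ) (x : Fin d → ℝ) : Fin d → Fin d → ℝ :=
  fun i j => pd i (fun y => pd j f y) x

/-- Laplacian of a scalar field. -/
def lap {d : ℕ} (f : (Fin d → ℝ) → ℝ) (x : Fin d → ℝ) : ℝ :=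
  ∑ i, pd i (fun y => pd i f y) x

/-- Jacobian matrix of a vector field: `(jac u x) i j = ∂_j u_i`. -/
def jac {d : ℕ} (u : (Fin d → ℝ) → (Fin d → ℝ)) (x : Fin d → ℝ) : Fin d → Fin d → ℝ :=
  fun i j => pd j (fun y => u y i) x

/-- Symmetric part of the gradient of a vector field, `Du = (∇u + (∇u)ᵀ)/2`. -/
def symD {d : ℕ} (u : (Fin d → ℝ) → (Fin d → ℝ)) (x : Fin d → ℝ) : Fin d → Fin d → ℝ :=
  fun i j => (jac u x i j + jac u x j i) / 2

/-- Antisymmetric part of the gradient of a vector field, `Au = (∇u − (∇u)ᵀ)/2`. -/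
def antiD {d : ℕ} (u : (Fin d → ℝ) → (Fin d → ℝ)) (x : Fin d → ℝ) : Fin d → Fin d → ℝ :=
  fun i j => (jac u x i j - jac u x j i) / 2

/-- Tensor product of two vectors: `(a ⊗ b)_{ij} = a_i b_j`. -/
def tens {d : ℕ} (a b : Fin d → ℝ) : Fin d → Fin d → ℝ := fun i j => a i * b j

/-- ℤ^d-periodicity: a function of this kind descends to the torus `T^d = ℝ^d/ℤ^d`. -/
def SpacePeriodic {d : ℕ} {E : Type*} (f : (Fin d → ℝ) → E) : Prop :=
  ∀ x : Fin d → ℝ, ∀ n : Fin d → ℤ, f (x + fun i => (n i : ℝ)) = f x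

/-- Fundamental domain of the torus `T^d = ℝ^d/ℤ^d` (with its probability Lebesgue measure). -/
def unitBox (d : ℕ) : Set (Fin d → ℝ) := Set.Icc 0 1

/-- The approximating viscosity coefficient `h_ε(r) = r + ε r^{7/8} + ε r^γ`. -/
def hfun (ε γ r : ℝ) : ℝ := r + ε * r ^ ((7 : ℝ) / 8) + ε * r ^ γ

/-- `g_ε(r) = r h_ε'(r) − h_ε(r)`. -/
def gfun (ε γ r : ℝ) : ℝ := r * deriv (hfun ε γ) r - hfun ε γ r

/-- `λ(ε) = e^{−1/ε⁴}`. -/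
def lamfun (ε : ℝ) : ℝ := Real.exp (-1 / ε ^ 4)

/-- The damping coefficient `p̃_ε(r) = λ(ε)(r^{1/ε²} + r^{−1/ε²})`. -/
def ptil (ε r : ℝ) : ℝ := lamfun ε * (r ^ (1 / ε ^ 2) + r ^ (-(1 / ε ^ 2)))

/-- `μ = ν − √(ν² − κ²)`. -/
def muof (ν κ : ℝ) : ℝ := ν - Real.sqrt (ν ^ 2 - κ ^ 2)

/-- `p_ε` is an antiderivative on `(0,∞)` of `r ↦ μ p̃_ε(r) h_ε'(r) / r`. -/
def IsPeps (ε γ ν κ : ℝ) (P : ℝ → ℝ) : Prop :=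
  ∀ r : ℝ, 0 < r → HasDerivAt P (muof ν κ * ptil ε r * deriv (hfun ε γ) r / r) r

/-- `φ_ε` is a smooth function on `(0,∞)` with `r φ_ε'(r) = h_ε'(r)`. -/
def IsPhieps (ε γ : ℝ) (Φ : ℝ → ℝ) : Prop :=
  ContDiffOn ℝ (⊤ : ℕ∞) Φ (Set.Ioi 0) ∧ ∀ r : ℝ, 0 < r → r * deriv Φ r = deriv (hfun ε γ) r

/-- `f_ε` satisfies `r f_ε'(r) − f_ε(r) = p_ε(r)` on `(0,∞)`. -/
def IsFeps (P F : ℝ → ℝ) : Prop :=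
  (∀ r : ℝ, 0 < r → DifferentiableAt ℝ F r) ∧
  ∀ r : ℝ, 0 < r → r * deriv F r - F r = P r

/-- The vector field `∇( h_ε'(ρ) div(h_ε'(ρ) ∇√ρ) / √ρ )`; the capillarity term of (QNS_ε) is
`2 κ² ρ` times this field. -/
def Kvec {d : ℕ} (ε γ : ℝ) (ρ : (Fin d → ℝ) → ℝ) (x : Fin d → ℝ) : Fin d → ℝ :=
  grad (fun y => deriv (hfun ε γ) (ρ y) *
      dvg (fun z => deriv (hfun ε γ) (ρ z) • grad (fun w => Real.sqrt (ρ w)) z) y /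
      Real.sqrt (ρ y)) x

/-- A smooth solution of the approximating system (QNS_ε) on `(0,T) × T^d`:
a pair of `C^∞` functions on `[0,T] × T^d` with `ρ > 0` everywhere, satisfying the continuity
equation and the momentum equation pointwise. -/
def IsQNSSol (d : ℕ) (ε γ ν κ T : ℝ) (P : ℝ → ℝ)
    (ρ : ℝ → (Fin d → ℝ) → ℝ) (u : ℝ → (Fin d → ℝ) → (Fin d → ℝ)) : Prop :=
  ContDiffOn ℝ (⊤ : ℕ∞) (fun p : ℝ × (Fin d → ℝ) => ρ p.1 p.2) (Set.Icc 0 T ×ˢ Set.univ) ∧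
  ContDiffOn ℝ (⊤ : ℕ∞) (fun p : ℝ × (Fin d → ℝ) => u p.1 p.2) (Set.Icc 0 T ×ˢ Set.univ) ∧
  (∀ t x, 0 < ρ t x) ∧
  (∀ t, SpacePeriodic (ρ t)) ∧
  (∀ t, SpacePeriodic (u t)) ∧
  (∀ t ∈ Set.Ioo 0 T, ∀ x : Fin d → ℝ,
    deriv (fun s => ρ s x) t + dvg (fun y => ρ t y • u t y) x = 0) ∧
  (∀ t ∈ Set.Ioo 0 T, ∀ x : Fin d → ℝ, ∀ i : Fin d,
    deriv (fun s => ρ s x * u s x i) t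
      + dvgM (fun y i' j => ρ t y * u t y i' * u t y j) x i
      + grad (fun y => ρ t y ^ γ + P (ρ t y)) x i
      + ptil ε (ρ t x) * u t x i
    = 2 * ν * dvgM (fun y i' j => hfun ε γ (ρ t y) * symD (u t) y i' j) x i
      + 2 * ν * grad (fun y => gfun ε γ (ρ t y) * dvg (u t) y) x i
      + 2 * κ ^ 2 * ρ t x * Kvec ε γ (ρ t) x i)


/-! ### Smooth periodic functions -/

def SP {d : ℕ} (f : (Fin d → ℝ) → ℝ) : Prop := ContDiff ℝ (⊤ : ℕ∞) f ∧ SpacePeriodic f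

lemma SP.diff {d : ℕ} {f : (Fin d → ℝ) → ℝ} (hf : SP f) (x) : DifferentiableAt ℝ f x :=
  (hf.1.differentiable (by simp)) x

lemma SP.cont {d : ℕ} {f : (Fin d → ℝ) → ℝ} (hf : SP f) : Continuous f := hf.1.continuous

lemma SP.add {d : ℕ} {f g : (Fin d → ℝ) → ℝ} (hf : SP f) (hg : SP g) :
    SP (fun x => f x + g x) :=
  ⟨hf.1.add hg.1, fun x n => by simp only [hf.2 x n, hg.2 x n]⟩

lemma SP.sub {d : ℕ} {f g : (Fin d → ℝ) → ℝ} (hf : SP f) (hg : SP g) :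
    SP (fun x => f x - g x) :=
  ⟨hf.1.sub hg.1, fun x n => by simp only [hf.2 x n, hg.2 x n]⟩

lemma SP.mul {d : ℕ} {f g : (Fin d → ℝ) → ℝ} (hf : SP f) (hg : SP g) :
    SP (fun x => f x * g x) :=
  ⟨hf.1.mul hg.1, fun x n => by simp only [hf.2 x n, hg.2 x n]⟩

lemma SP.pow {d : ℕ} {f : (Fin d → ℝ) → ℝ} (hf : SP f) (m : ℕ) :
    SP (fun x => f x ^ m) :=
  ⟨hf.1.pow m, fun x n => by simp only [hf.2 x n]⟩

lemma SP.neg {d : ℕ} {f : (Fin d → ℝ) → ℝ} (hf : SP f) : SP (fun x => - f x) :=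
  ⟨hf.1.neg, fun x n => by simp only [hf.2 x n]⟩

lemma SP.const {d : ℕ} (a : ℝ) : SP (fun _ : Fin d → ℝ => a) :=
  ⟨contDiff_const, fun _ _ => rfl⟩

lemma SP.sum {d : ℕ} {ι : Type*} [Fintype ι] {f : ι → (Fin d → ℝ) → ℝ} (hf : ∀ i, SP (f i)) :
    SP (fun x => ∑ i, f i x) :=
  ⟨ContDiff.sum fun i _ => (hf i).1, fun x n => Finset.sum_congr rfl fun i _ => (hf i).2 x n⟩

lemma SP.pd {d : ℕ} {f : (Fin d → ℝ) → ℝ} (hf : SP f) (i : Fin d) : SP (pd i f) := by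
  refine ⟨?_, fun x n => ?_⟩
  · have : ContDiff ℝ (⊤ : ℕ∞) (fderiv ℝ f) := hf.1.fderiv_right (by simp)
    exact this.clm_apply contDiff_const
  · unfold _root_.pd
    rw [← fderiv_comp_add_right]
    congr 2
    funext y
    exact hf.2 y n

lemma SP.comp {d : ℕ} {f : (Fin d → ℝ) → ℝ} {G : ℝ → ℝ} (hf : SP f)
    (hG : ContDiffOn ℝ (⊤ : ℕ∞) G (Set.Ioi 0)) (hpos : ∀ x, 0 < f x) :
    SP (fun x => G (f x)) :=
  ⟨hG.comp_contDiff hf.1 hpos, fun x n => by simp only [hf.2 x n]⟩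

lemma two_le_top' : minSmoothness ℝ 2 ≤ ((⊤ : ℕ∞) : WithTop ℕ∞) := by
  simp only [minSmoothness_of_isRCLikeNormedField]
  exact WithTop.coe_le_coe.2 (le_top : (2 : ℕ∞) ≤ ⊤)

section pdrules
variable {d : ℕ} {f g : (Fin d → ℝ) → ℝ}

lemma pd_add (i : Fin d) (hf : SP f) (hg : SP g) (x) :
    pd i (fun y => f y + g y) x = pd i f x + pd i g x := by
  unfold pd; rw [fderiv_fun_add (hf.diff x) (hg.diff x)]; simp

lemma pd_sub (i : Fin d) (hf : SP f) (hg : SP g) (x) :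
    pd i (fun y => f y - g y) x = pd i f x - pd i g x := by
  unfold pd; rw [fderiv_fun_sub (hf.diff x) (hg.diff x)]; simp

lemma pd_neg (i : Fin d) (x) :
    pd i (fun y => - f y) x = - pd i f x := by
  unfold pd; rw [fderiv_fun_neg]; simp

lemma pd_mul (i : Fin d) (hf : SP f) (hg : SP g) (x) :
    pd i (fun y => f y * g y) x = f x * pd i g x + pd i f x * g x := by
  unfold pd; rw [fderiv_fun_mul (hf.diff x) (hg.diff x)]; simp; ring

lemma pd_cmul (i : Fin d) (a : ℝ) (hf : SP f) (x) :
    pd i (fun y => a * f y) x = a * pd i f x := by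
  unfold pd; rw [fderiv_const_mul (hf.diff x)]; simp

lemma pd_sum {ι : Type*} [Fintype ι] {F : ι → (Fin d → ℝ) → ℝ} (i : Fin d)
    (hf : ∀ k, SP (F k)) (x) :
    pd i (fun y => ∑ k, F k y) x = ∑ k, pd i (F k) x := by
  unfold pd; rw [fderiv_fun_sum (fun k _ => (hf k).diff x)]; simp

lemma pd_comp {G : ℝ → ℝ} (i : Fin d) (hf : SP f)
    (hG : ContDiffOn ℝ (⊤ : ℕ∞) G (Set.Ioi 0)) (hpos : ∀ x, 0 < f x) (x) :
    pd i (fun y => G (f y)) x = deriv G (f x) * pd i f x := by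
  have hGd : DifferentiableAt ℝ G (f x) :=
    (hG.contDiffAt (Ioi_mem_nhds (hpos x))).differentiableAt (by simp)
  have := hGd.hasDerivAt.comp_hasFDerivAt x (hf.diff x).hasFDerivAt
  unfold pd
  have h2 := this.fderiv
  simp only [Function.comp_def] at h2
  rw [h2]; simp

lemma pd_pd_comm (i j : Fin d) (hf : SP f) (x) :
    pd i (pd j f) x = pd j (pd i f) x := by
  have hd : DifferentiableAt ℝ (fderiv ℝ f) x :=
    ((hf.1.fderiv_right (m := (⊤ : ℕ∞)) (by simp)).differentiable (by simp)) x
  have hs : IsSymmSndFDerivAt ℝ f x :=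
    (hf.1.contDiffAt).isSymmSndFDerivAt two_le_top'
  have key : ∀ a b : Fin d, pd a (pd b f) x
      = fderiv ℝ (fderiv ℝ f) x (Pi.single a 1) (Pi.single b 1) := by
    intro a b
    unfold pd
    rw [fderiv_clm_apply hd (differentiableAt_const _)]
    simp
  rw [key, key]
  exact hs _ _

end pdrules

/-- integral of a partial derivative of a smooth periodic function vanishes. -/
lemma integral_pd_eq_zero {d : ℕ} {f : (Fin d → ℝ) → ℝ} (hf : SP f) (i : Fin d) :
    ∫ x in unitBox d, pd i f x = 0 := by
  obtain ⟨n, rfl⟩ : ∃ n, d = n + 1 := ⟨d - 1, by have := i.pos; omega⟩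
  have hle : (0 : Fin (n+1) → ℝ) ≤ 1 := fun _ => zero_le_one
  have key := integral_divergence_of_hasFDerivAt_off_countable' (E := ℝ) (0 : Fin (n+1) → ℝ) 1 hle
    (fun j x => if j = i then f x else 0)
    (fun j x => if j = i then fderiv ℝ f x else 0) ∅ Set.countable_empty
    (by
      intro j
      by_cases h : j = i
      · simp only [h, if_true]; exact hf.cont.continuousOn
      · simp only [h, if_false]; exact continuousOn_const)
    (by
      intro x _ j
      by_cases h : j = i
      · simp only [h, if_true]; exact (hf.diff x).hasFDerivAt
      · simp only [h, if_false]; exact hasFDerivAt_const _ _)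
    (by
      have : (fun x => ∑ j, (if j = i then fderiv ℝ f x else 0) (Pi.single j 1)) = pd i f := by
        funext x
        rw [Finset.sum_eq_single i]
        · simp [pd]
        · intro b _ hb; simp [hb]
        · simp
      rw [this]
      exact (hf.pd i).cont.continuousOn.integrableOn_compact isCompact_Icc)
  have e1 : ∀ x, (∑ j, (if j = i then fderiv ℝ f x else 0) (Pi.single j 1)) = pd i f x := by
    intro x
    rw [Finset.sum_eq_single i]
    · simp [pd]
    · intro b _ hb; simp [hb]
    · simp
  simp only [e1] at key
  unfold unitBox
  rw [key, Finset.sum_eq_single i]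
  · simp only [if_true]
    rw [sub_eq_zero]
    congr 1
    funext y
    have := hf.2 (i.insertNth ((0 : Fin (n+1) → ℝ) i) y) (Pi.single i 1)
    rw [← this]
    congr 1
    funext k
    refine Fin.succAboveCases i ?_ (fun k => ?_) k
    · simp
    · simp [Fin.succAbove_ne]
  · intro b _ hb; simp [hb]
  · simp

/-! ### Pointwise identities in space -/

section spatial
variable {d : ℕ}

/-- transport identity -/
lemma transport {R : (Fin d → ℝ) → ℝ} {U V : Fin d → (Fin d → ℝ) → ℝ}
    (hR : SP R) (hU : ∀ i, SP (U i)) (hV : ∀ i, SP (V i)) (x : Fin d → ℝ)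
    (rt : ℝ) (vt : Fin d → ℝ) (hrt : rt = - ∑ j, pd j (fun y => R y * U j y) x) :
    rt * ((∑ i, V i x ^ 2) / 2) + R x * ∑ i, V i x * vt i
      = - (∑ j, pd j (fun y => R y * U j y * ((1 / 2) * ∑ i, V i y ^ 2)) x)
        + ∑ i, V i x * (R x * (vt i + ∑ j, U j x * pd j (V i) x)) := by
  have h1 : ∀ j, pd j (fun y => R y * U j y * ((1 / 2) * ∑ i, V i y ^ 2)) x
      = pd j (fun y => R y * U j y) x * ((∑ i, V i x ^ 2) / 2)
        + ∑ i, V i x * (R x * (U j x * pd j (V i) x)) := by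
    intro j
    rw [pd_mul j (hR.mul (hU j)) ((SP.const _).mul (SP.sum fun i => (hV i).pow 2)),
      pd_cmul j _ (SP.sum fun i => (hV i).pow 2), pd_sum j (fun i => (hV i).pow 2)]
    have : ∀ i, pd j (fun y => V i y ^ 2) x = 2 * (V i x * pd j (V i) x) := by
      intro i
      simp only [pow_two]
      rw [pd_mul j (hV i) (hV i)]; ring
    simp only [this]
    rw [← Finset.mul_sum]
    have e : ∑ i, V i x * (R x * (U j x * pd j (V i) x))
        = R x * U j x * ∑ i, V i x * pd j (V i) x := by
      rw [Finset.mul_sum]; exact Finset.sum_congr rfl fun i _ => by ring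
    rw [e]; ring
  simp only [h1]
  simp only [Finset.sum_add_distrib, mul_add, Finset.mul_sum]
  rw [Finset.sum_comm (f := fun j i => V i x * (R x * (U j x * pd j (V i) x)))]
  rw [hrt, ← Finset.sum_mul]
  have e : ∑ i, R x * (V i x * vt i) = ∑ i, V i x * (R x * vt i) :=
    Finset.sum_congr rfl fun i _ => by ring
  rw [e]; ring

/-- integration by parts identity -/
lemma ibp {s : (Fin d → ℝ) → ℝ} {S : Fin d → Fin d → (Fin d → ℝ) → ℝ}
    {V : Fin d → (Fin d → ℝ) → ℝ}
    (hs : SP s) (hS : ∀ i j, SP (S i j)) (hV : ∀ i, SP (V i)) (x : Fin d → ℝ) :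
    ∑ i, V i x * (∑ j, pd j (S i j) x + pd i s x)
      = (∑ j, pd j (fun y => (∑ i, V i y * S i j y) + V j y * s y) x)
        - (∑ i, ∑ j, S i j x * pd j (V i) x) - s x * ∑ j, pd j (V j) x := by
  have h1 : ∀ j, pd j (fun y => (∑ i, V i y * S i j y) + V j y * s y) x
      = (∑ i, V i x * pd j (S i j) x) + (∑ i, S i j x * pd j (V i) x)
        + V j x * pd j s x + s x * pd j (V j) x := by
    intro j
    rw [pd_add j (SP.sum fun i => (hV i).mul (hS i j)) ((hV j).mul hs),
      pd_sum j (fun i => (hV i).mul (hS i j)), pd_mul j (hV j) hs, ← Finset.sum_add_distrib]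
    have : ∀ i, pd j (fun y => V i y * S i j y) x
        = V i x * pd j (S i j) x + S i j x * pd j (V i) x := by
      intro i; rw [pd_mul j (hV i) (hS i j)]; ring
    simp only [this]; ring
  simp only [h1, Finset.sum_add_distrib, mul_add, Finset.mul_sum]
  rw [Finset.sum_comm (f := fun j i => V i x * pd j (S i j) x),
    Finset.sum_comm (f := fun j i => S i j x * pd j (V i) x)]
  ring

/-- internal energy identity: `A` the energy, `B` the pressure. -/
lemma internal {R A B : (Fin d → ℝ) → ℝ} {U : Fin d → (Fin d → ℝ) → ℝ}
    (hR : SP R) (hU : ∀ i, SP (U i)) (hA : SP A) (hB : SP B) (x : Fin d → ℝ)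
    (rt a' : ℝ) (hrt : rt = - ∑ j, pd j (fun y => R y * U j y) x)
    (hAd : ∀ j, pd j A x = a' * pd j R x) (hAB : R x * a' - A x = B x) :
    a' * rt = - (∑ j, pd j (fun y => (A y + B y) * U j y) x) + ∑ j, U j x * pd j B x := by
  rw [hrt, mul_neg, Finset.mul_sum, ← Finset.sum_neg_distrib, ← Finset.sum_neg_distrib,
    ← Finset.sum_add_distrib]
  refine Finset.sum_congr rfl fun j _ => ?_
  rw [pd_mul j hR (hU j), pd_mul j (hA.add hB) (hU j), pd_add j hA hB, hAd, ← hAB]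
  ring

lemma sum_symm (f : Fin d → Fin d → ℝ) :
    ∑ i, ∑ j, f i j = ∑ i, ∑ j, (f i j + f j i) / 2 := by
  have h := Finset.sum_comm (s := Finset.univ) (t := Finset.univ) (f := f)
  have : ∑ i, ∑ j, (f i j + f j i) / 2 = (∑ i, ∑ j, f i j + ∑ i, ∑ j, f j i) / 2 := by
    simp only [← Finset.sum_div, Finset.sum_add_distrib]
  rw [this, ← h]; ring

/-- dissipation algebra -/
lemma dissip (h c ν κ : ℝ) (Ux Vx Wx : Fin d → Fin d → ℝ) (hW : ∀ i j, Wx i j = Wx j i)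
    (hV : ∀ i j, Vx i j = Ux i j + c * Wx i j) :
    (∑ i, ∑ j, h * (2 * ν * ((Ux i j + Ux j i) / 2) - c * Ux j i + κ ^ 2 * Wx j i) * Vx i j)
      - (c ^ 2 - 2 * ν * c + κ ^ 2) * ∑ i, ∑ j, h * Ux j i * Wx i j
    = c * (h * ∑ i, ∑ j, ((Vx i j - Vx j i) / 2) ^ 2)
      + (2 * ν - c) * (h * ∑ i, ∑ j, ((Vx i j + Vx j i) / 2) ^ 2)
      + c * (c ^ 2 - 2 * ν * c + κ ^ 2) * (h * ∑ i, ∑ j, Wx j i ^ 2) := by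
  simp only [Finset.mul_sum, ← Finset.sum_add_distrib, ← Finset.sum_sub_distrib]
  rw [sum_symm]
  refine Finset.sum_congr rfl fun i _ => Finset.sum_congr rfl fun j _ => ?_
  rw [hV i j, hV j i, hW j i]
  ring

/-- material derivative of `∇φ`. -/
lemma matw {R H H1 G : (Fin d → ℝ) → ℝ} {U W : Fin d → (Fin d → ℝ) → ℝ}
    (hR : SP R) (hH : SP H) (hH1 : SP H1)
    (hU : ∀ i, SP (U i)) (hW : ∀ i, SP (W i))
    (hG : ∀ y, G y = R y * H1 y - H y)
    (hHd : ∀ i y, pd i H y = H1 y * pd i R y)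
    (hRW : ∀ i y, R y * W i y = pd i H y)
    (hsym : ∀ i j y, pd i (W j) y = pd j (W i) y) (x : Fin d → ℝ) (wt : Fin d → ℝ)
    (hwt : ∀ i, wt i = - pd i (fun y => (∑ j, U j y * W j y) + H1 y * ∑ j, pd j (U j) y) x)
    (i : Fin d) :
    R x * (wt i + ∑ j, U j x * pd j (W i) x)
      = - (∑ j, pd j (fun y => H y * pd i (U j) y) x
          + pd i (fun y => G y * ∑ j, pd j (U j) y) x) := by
  have hD : SP (fun y => ∑ j, pd j (U j) y) := SP.sum fun j => (hU j).pd j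
  have hGe : G = fun y => R y * H1 y - H y := funext hG
  have e1 : pd i (fun y => (∑ j, U j y * W j y) + H1 y * ∑ j, pd j (U j) y) x
      = (∑ j, U j x * pd j (W i) x) + (∑ j, pd i (U j) x * W j x)
        + (H1 x * pd i (fun y => ∑ j, pd j (U j) y) x
          + pd i H1 x * ∑ j, pd j (U j) x) := by
    rw [pd_add i (SP.sum fun j => (hU j).mul (hW j)) (hH1.mul hD), pd_mul i hH1 hD,
      pd_sum i (fun j => (hU j).mul (hW j)), ← Finset.sum_add_distrib]
    congr 1
    refine Finset.sum_congr rfl fun j _ => ?_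
    rw [pd_mul i (hU j) (hW j), hsym i j]
  have e2 : ∑ j, pd j (fun y => H y * pd i (U j) y) x
      = H x * pd i (fun y => ∑ j, pd j (U j) y) x + R x * ∑ j, pd i (U j) x * W j x := by
    rw [pd_sum i (fun j => (hU j).pd j), Finset.mul_sum, Finset.mul_sum, ← Finset.sum_add_distrib]
    refine Finset.sum_congr rfl fun j _ => ?_
    rw [pd_mul j hH ((hU j).pd i), ← hRW j, pd_pd_comm j i (hU j)]
    ring
  have e3 : pd i (fun y => G y * ∑ j, pd j (U j) y) x
      = G x * pd i (fun y => ∑ j, pd j (U j) y) x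
        + R x * pd i H1 x * ∑ j, pd j (U j) x := by
    rw [hGe, pd_mul i ((hR.mul hH1).sub hH) hD, pd_sub i (hR.mul hH1) hH, pd_mul i hR hH1,
      hHd]
    ring
  rw [hwt, e1, e2, e3, hG]
  ring

/-- Bohm identity in flux form. -/
lemma bohm {R H H1 G : (Fin d → ℝ) → ℝ} {W : Fin d → (Fin d → ℝ) → ℝ}
    (hR : SP R) (hH : SP H) (hH1 : SP H1) (hW : ∀ i, SP (W i))
    (hG : ∀ y, G y = R y * H1 y - H y)
    (hHd : ∀ i y, pd i H y = H1 y * pd i R y)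
    (hRW : ∀ i y, R y * W i y = pd i H y)
    (hsym : ∀ i j y, pd i (W j) y = pd j (W i) y) (x : Fin d → ℝ)
    (i : Fin d) :
    2 * R x * pd i (fun y => (1 / 2) * (H1 y * ∑ j, pd j (W j) y)
        + (1 / 4) * ∑ j, W j y ^ 2) x
      = ∑ j, pd j (fun y => H y * pd i (W j) y) x
          + pd i (fun y => G y * ∑ j, pd j (W j) y) x := by
  have hD : SP (fun y => ∑ j, pd j (W j) y) := SP.sum fun j => (hW j).pd j
  have hGe : G = fun y => R y * H1 y - H y := funext hG
  have e1 : pd i (fun y => (1 / 2) * (H1 y * ∑ j, pd j (W j) y)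
        + (1 / 4) * ∑ j, W j y ^ 2) x
      = (1 / 2) * (H1 x * pd i (fun y => ∑ j, pd j (W j) y) x
          + pd i H1 x * ∑ j, pd j (W j) x) + (1 / 2) * ∑ j, W j x * pd i (W j) x := by
    rw [pd_add i ((SP.const _).mul (hH1.mul hD)) ((SP.const _).mul (SP.sum fun j => (hW j).pow 2)),
      pd_cmul i _ (hH1.mul hD), pd_mul i hH1 hD, pd_cmul i _ (SP.sum fun j => (hW j).pow 2),
      pd_sum i (fun j => (hW j).pow 2)]
    congr 1
    rw [Finset.mul_sum, Finset.mul_sum]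
    refine Finset.sum_congr rfl fun j _ => ?_
    simp only [pow_two]
    rw [pd_mul i (hW j) (hW j)]; ring
  have e2 : ∑ j, pd j (fun y => H y * pd i (W j) y) x
      = H x * pd i (fun y => ∑ j, pd j (W j) y) x + R x * ∑ j, W j x * pd i (W j) x := by
    rw [pd_sum i (fun j => (hW j).pd j), Finset.mul_sum, Finset.mul_sum, ← Finset.sum_add_distrib]
    refine Finset.sum_congr rfl fun j _ => ?_
    rw [pd_mul j hH ((hW j).pd i), ← hRW j, pd_pd_comm j i (hW j)]
    ring
  have e3 : pd i (fun y => G y * ∑ j, pd j (W j) y) x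
      = G x * pd i (fun y => ∑ j, pd j (W j) y) x
        + R x * pd i H1 x * ∑ j, pd j (W j) x := by
    rw [hGe, pd_mul i ((hR.mul hH1).sub hH) hD, pd_sub i (hR.mul hH1) hH, pd_mul i hR hH1,
      hHd]
    ring
  rw [e1, e2, e3, hG]
  ring

/-- momentum convective form -/
lemma convec {R : (Fin d → ℝ) → ℝ} {U : Fin d → (Fin d → ℝ) → ℝ}
    (hR : SP R) (hU : ∀ i, SP (U i)) (x : Fin d → ℝ) (rt uti : ℝ)
    (hrt : rt = - ∑ j, pd j (fun y => R y * U j y) x) (i : Fin d) :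
    (rt * U i x + R x * uti) + ∑ j, pd j (fun y => R y * U i y * U j y) x
      = R x * (uti + ∑ j, U j x * pd j (U i) x) := by
  have : ∀ j, pd j (fun y => R y * U i y * U j y) x
      = U i x * pd j (fun y => R y * U j y) x + R x * (U j x * pd j (U i) x) := by
    intro j
    rw [pd_mul j (hR.mul (hU i)) (hU j), pd_mul j hR (hU i), pd_mul j hR (hU j)]
    ring
  simp only [this, Finset.sum_add_distrib, ← Finset.mul_sum]
  rw [hrt]; ring

/-- Full pointwise energy identity. -/
lemma pointwise (ν κ c m : ℝ)
    {R H H1 G A1 B1 A2 B2 : (Fin d → ℝ) → ℝ} {U V W : Fin d → (Fin d → ℝ) → ℝ}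
    (hR : SP R) (hH : SP H) (hH1 : SP H1) (hG' : SP G)
    (hA1 : SP A1) (hB1 : SP B1) (hA2 : SP A2) (hB2 : SP B2)
    (hU : ∀ i, SP (U i)) (hV : ∀ i, SP (V i)) (hW : ∀ i, SP (W i))
    (hVU : ∀ i y, V i y = U i y + c * W i y)
    (hG : ∀ y, G y = R y * H1 y - H y)
    (hHd : ∀ i y, pd i H y = H1 y * pd i R y)
    (hRW : ∀ i y, R y * W i y = pd i H y)
    (hsym : ∀ i j y, pd i (W j) y = pd j (W i) y) (x : Fin d → ℝ)
    (rt a1 a2 pt : ℝ) (ut wt : Fin d → ℝ)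
    (hrt : rt = - ∑ j, pd j (fun y => R y * U j y) x)
    (hwt : ∀ i, wt i = - pd i (fun y => (∑ j, U j y * W j y) + H1 y * ∑ j, pd j (U j) y) x)
    (hA1d : ∀ j, pd j A1 x = a1 * pd j R x) (hAB1 : R x * a1 - A1 x = B1 x)
    (hA2d : ∀ j, pd j A2 x = a2 * pd j R x) (hAB2 : R x * a2 - A2 x = B2 x)
    (hpt : ∀ j, pd j B2 x = m * (pt * W j x)) (hm : m ≠ 0)
    (hmom : ∀ i, (rt * U i x + R x * ut i) + ∑ j, pd j (fun y => R y * U i y * U j y) x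
        + (pd i B1 x + pd i B2 x) + pt * U i x
      = 2 * ν * ∑ j, pd j (fun y => H y * ((pd j (U i) y + pd i (U j) y) / 2)) x
        + 2 * ν * pd i (fun y => G y * ∑ j, pd j (U j) y) x
        + κ ^ 2 * (∑ j, pd j (fun y => H y * pd i (W j) y) x
          + pd i (fun y => G y * ∑ j, pd j (W j) y) x)) :
    ∃ X : Fin d → (Fin d → ℝ) → ℝ, 
      (X = fun j y => - (R y * U j y * ((1 / 2) * ∑ i, V i y ^ 2))
        - (c ^ 2 - 2 * ν * c + κ ^ 2) * (R y * U j y * ((1 / 2) * ∑ i, W i y ^ 2))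
        - (A1 y + B1 y) * U j y - (m - c) / m * ((A2 y + B2 y) * U j y)
        + ((∑ i, V i y * (H y * (2 * ν * ((pd j (U i) y + pd i (U j) y) / 2) - c * pd i (U j) y
              + κ ^ 2 * pd i (W j) y)))
            + V j y * (G y * ((2 * ν - c) * ∑ k, pd k (U k) y + κ ^ 2 * ∑ k, pd k (W k) y)))
        - (c ^ 2 - 2 * ν * c + κ ^ 2) * ((∑ i, W i y * (H y * pd i (U j) y))
            + W j y * (G y * ∑ k, pd k (U k) y))) ∧
      (∀ j, SP (X j)) ∧
      rt * ((∑ i, V i x ^ 2) / 2) + R x * (∑ i, V i x * (ut i + c * wt i))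
        + a1 * rt + (m - c) / m * (a2 * rt)
        + (c ^ 2 - 2 * ν * c + κ ^ 2) *
          (rt * ((∑ i, W i x ^ 2) / 2) + R x * (∑ i, W i x * wt i))
      = ∑ j, pd j (X j) x
        - c * (H x * ∑ i, ∑ j, ((pd j (V i) x - pd i (V j) x) / 2) ^ 2)
        - (2 * ν - c) * (H x * ∑ i, ∑ j, ((pd j (V i) x + pd i (V j) x) / 2) ^ 2
            + G x * (∑ j, pd j (V j) x) ^ 2)
        - pt * (∑ i, V i x ^ 2)
        - c * ∑ i, W i x * pd i B1 x
        - c * ((m - c) / m) * ∑ i, W i x * pd i B2 x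
        - c * (c ^ 2 - 2 * ν * c + κ ^ 2) * (H x * ∑ i, ∑ j, pd i (W j) x ^ 2)
        - c * (c ^ 2 - 2 * ν * c + κ ^ 2) * (G x * (∑ j, pd j (W j) x) ^ 2) := by
  set K : ℝ := c ^ 2 - 2 * ν * c + κ ^ 2 with hK
  set S : Fin d → Fin d → (Fin d → ℝ) → ℝ := fun i j y =>
    H y * (2 * ν * ((pd j (U i) y + pd i (U j) y) / 2) - c * pd i (U j) y
              + κ ^ 2 * pd i (W j) y) with hSdef
  set s : (Fin d → ℝ) → ℝ := fun y =>
    G y * ((2 * ν - c) * ∑ k, pd k (U k) y + κ ^ 2 * ∑ k, pd k (W k) y) with hsdef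
  have hD : SP (fun y => ∑ j, pd j (U j) y) := SP.sum fun j => (hU j).pd j
  have hL : SP (fun y => ∑ j, pd j (W j) y) := SP.sum fun j => (hW j).pd j
  have hsym2 : ∀ i j, SP (fun y => (pd j (U i) y + pd i (U j) y) / 2) := by
    intro i j
    have : SP (fun y => (pd j (U i) y + pd i (U j) y) * (1 / 2)) :=
      (((hU i).pd j).add ((hU j).pd i)).mul (SP.const _)
    simpa only [div_eq_mul_inv, one_mul] using this
  have hS : ∀ i j, SP (S i j) := fun i j =>
    hH.mul ((((SP.const (2 * ν)).mul (hsym2 i j)).sub ((SP.const c).mul ((hU j).pd i))).add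
      ((SP.const (κ ^ 2)).mul ((hW j).pd i)))
  have hs : SP s :=
    hG'.mul (((SP.const (2 * ν - c)).mul hD).add ((SP.const (κ ^ 2)).mul hL))
  have hX1 : ∀ j, SP (fun y => R y * U j y * ((1 / 2) * ∑ i, V i y ^ 2)) := fun j =>
    (hR.mul (hU j)).mul ((SP.const _).mul (SP.sum fun i => (hV i).pow 2))
  have hX2 : ∀ j, SP (fun y => R y * U j y * ((1 / 2) * ∑ i, W i y ^ 2)) := fun j =>
    (hR.mul (hU j)).mul ((SP.const _).mul (SP.sum fun i => (hW i).pow 2))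
  have hX3 : ∀ j, SP (fun y => (A1 y + B1 y) * U j y) := fun j => (hA1.add hB1).mul (hU j)
  have hX4 : ∀ j, SP (fun y => (A2 y + B2 y) * U j y) := fun j => (hA2.add hB2).mul (hU j)
  have hX5 : ∀ j, SP (fun y => (∑ i, V i y * S i j y) + V j y * s y) := fun j =>
    (SP.sum fun i => (hV i).mul (hS i j)).add ((hV j).mul hs)
  have hX6 : ∀ j, SP (fun y => (∑ i, W i y * (H y * pd i (U j) y))
            + W j y * (G y * ∑ k, pd k (U k) y)) := fun j =>
    (SP.sum fun i => (hW i).mul (hH.mul ((hU j).pd i))).add ((hW j).mul (hG'.mul hD))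
  refine ⟨_, rfl, ?_, ?_⟩
  · intro j
    exact ((((((hX1 j).neg).sub ((SP.const K).mul (hX2 j))).sub (hX3 j)).sub
      ((SP.const _).mul (hX4 j))).add (hX5 j)).sub ((SP.const K).mul (hX6 j))
  have hXd : ∀ j, pd j (fun y => - (R y * U j y * ((1 / 2) * ∑ i, V i y ^ 2))
        - K * (R y * U j y * ((1 / 2) * ∑ i, W i y ^ 2))
        - (A1 y + B1 y) * U j y - (m - c) / m * ((A2 y + B2 y) * U j y)
        + ((∑ i, V i y * S i j y) + V j y * s y)
        - K * ((∑ i, W i y * (H y * pd i (U j) y))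
            + W j y * (G y * ∑ k, pd k (U k) y))) x
      = - pd j (fun y => R y * U j y * ((1 / 2) * ∑ i, V i y ^ 2)) x
        - K * pd j (fun y => R y * U j y * ((1 / 2) * ∑ i, W i y ^ 2)) x
        - pd j (fun y => (A1 y + B1 y) * U j y) x
        - (m - c) / m * pd j (fun y => (A2 y + B2 y) * U j y) x
        + pd j (fun y => (∑ i, V i y * S i j y) + V j y * s y) x
        - K * pd j (fun y => (∑ i, W i y * (H y * pd i (U j) y))
            + W j y * (G y * ∑ k, pd k (U k) y)) x := by
    intro j
    rw [pd_sub j (((((hX1 j).neg.sub ((SP.const K).mul (hX2 j))).sub (hX3 j)).sub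
      ((SP.const _).mul (hX4 j))).add (hX5 j)) ((SP.const K).mul (hX6 j)),
      pd_add j ((((hX1 j).neg.sub ((SP.const K).mul (hX2 j))).sub (hX3 j)).sub
      ((SP.const _).mul (hX4 j))) (hX5 j),
      pd_sub j (((hX1 j).neg.sub ((SP.const K).mul (hX2 j))).sub (hX3 j))
      ((SP.const _).mul (hX4 j)),
      pd_sub j ((hX1 j).neg.sub ((SP.const K).mul (hX2 j))) (hX3 j),
      pd_sub j (hX1 j).neg ((SP.const K).mul (hX2 j)), pd_neg,
      pd_cmul j _ (hX2 j), pd_cmul j _ (hX4 j), pd_cmul j _ (hX6 j)]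
  have hXs := Finset.sum_congr (rfl : (Finset.univ : Finset (Fin d)) = Finset.univ)
    (fun j _ => hXd j)
  rw [hXs]
  simp only [Finset.sum_sub_distrib, Finset.sum_add_distrib, Finset.sum_neg_distrib,
    ← Finset.mul_sum]
  -- the ingredients
  have t1 := transport hR hU hV x rt (fun i => ut i + c * wt i) hrt
  have t2 := transport hR hU hW x rt wt hrt
  have i1 := internal hR hU hA1 hB1 x rt a1 hrt hA1d hAB1
  have i2 := internal hR hU hA2 hB2 x rt a2 hrt hA2d hAB2
  have b1 := ibp hs hS hV x
  have b2 := ibp (hG'.mul hD) (fun i j => hH.mul ((hU j).pd i)) hW x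
  have mw := matw hR hH hH1 hU hW hG hHd hRW hsym x wt hwt
  have hVd : ∀ i j y, pd j (V i) y = pd j (U i) y + c * pd j (W i) y := by
    intro i j y
    rw [show V i = fun y => U i y + c * W i y from funext (hVU i),
      pd_add j (hU i) ((SP.const c).mul (hW i)), pd_cmul j c (hW i)]
  have hcomb : ∀ i, R x * ((ut i + c * wt i) + ∑ j, U j x * pd j (V i) x)
      = - (pd i B1 x + pd i B2 x) - pt * U i x + (∑ j, pd j (S i j) x + pd i s x) := by
    intro i
    have h1 := hmom i
    rw [convec hR hU x rt (ut i) hrt i] at h1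
    have h2 := mw i
    have h3 : ∑ j, U j x * pd j (V i) x
        = ∑ j, U j x * pd j (U i) x + c * ∑ j, U j x * pd j (W i) x := by
      rw [Finset.mul_sum, ← Finset.sum_add_distrib]
      exact Finset.sum_congr rfl fun j _ => by rw [hVd]; ring
    have h4 : ∑ j, pd j (S i j) x
        = 2 * ν * ∑ j, pd j (fun y => H y * ((pd j (U i) y + pd i (U j) y) / 2)) x
          - c * ∑ j, pd j (fun y => H y * pd i (U j) y) x
          + κ ^ 2 * ∑ j, pd j (fun y => H y * pd i (W j) y) x := by
      rw [Finset.mul_sum, Finset.mul_sum, Finset.mul_sum, ← Finset.sum_sub_distrib,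
        ← Finset.sum_add_distrib]
      refine Finset.sum_congr rfl fun j _ => ?_
      have q1 := hH.mul (hsym2 i j)
      have q2 := hH.mul ((hU j).pd i)
      have q3 := hH.mul ((hW j).pd i)
      rw [← pd_cmul j _ q1, ← pd_cmul j _ q2, ← pd_cmul j _ q3,
        ← pd_sub j ((SP.const _).mul q1) ((SP.const _).mul q2),
        ← pd_add j (((SP.const _).mul q1).sub ((SP.const _).mul q2)) ((SP.const _).mul q3)]
      congr 1
      funext y
      simp only [hSdef]; ring
    have h5 : pd i s x = (2 * ν - c) * pd i (fun y => G y * ∑ j, pd j (U j) y) x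
        + κ ^ 2 * pd i (fun y => G y * ∑ j, pd j (W j) y) x := by
      have q1 := hG'.mul hD
      have q2 := hG'.mul hL
      rw [← pd_cmul i _ q1, ← pd_cmul i _ q2,
        ← pd_add i ((SP.const _).mul q1) ((SP.const _).mul q2)]
      congr 1
      funext y
      simp only [hsdef]; ring
    rw [h3, h4, h5]
    linear_combination h1 + c * h2
  simp only [hcomb] at t1
  simp only [mw] at t2
  have e1 : ∑ i, V i x * (- (pd i B1 x + pd i B2 x) - pt * U i x
        + (∑ j, pd j (S i j) x + pd i s x))
      = ∑ i, V i x * (∑ j, pd j (S i j) x + pd i s x)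
        - ∑ i, U i x * pd i B1 x - c * ∑ i, W i x * pd i B1 x
        - (m - c) / m * ∑ i, U i x * pd i B2 x
        - c * ((m - c) / m) * ∑ i, W i x * pd i B2 x
        - pt * ∑ i, V i x ^ 2 := by
    simp only [Finset.mul_sum, ← Finset.sum_sub_distrib]
    refine Finset.sum_congr rfl fun i _ => ?_
    rw [hpt i, hVU i x]
    field_simp
    ring
  have e2 : ∑ i, W i x * -(∑ j, pd j (fun y => H y * pd i (U j) y) x
          + pd i (fun y => G y * ∑ j, pd j (U j) y) x)
      = - ∑ i, W i x * (∑ j, pd j (fun y => H y * pd i (U j) y) x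
          + pd i (fun y => G y * ∑ j, pd j (U j) y) x) := by
    rw [← Finset.sum_neg_distrib]
    exact Finset.sum_congr rfl fun i _ => by ring
  rw [e1, b1] at t1
  rw [e2, b2] at t2
  have dd := dissip (H x) c ν κ (fun i j => pd j (U i) x) (fun i j => pd j (V i) x)
    (fun i j => pd j (W i) x) (fun i j => hsym j i x) (fun i j => hVd i j x)
  have hdv : ∑ j, pd j (V j) x = ∑ j, pd j (U j) x + c * ∑ j, pd j (W j) x := by
    rw [Finset.mul_sum, ← Finset.sum_add_distrib]
    exact Finset.sum_congr rfl fun j _ => hVd j j x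
  rw [← hK] at dd
  simp only [hSdef, hsdef] at t1 ⊢
  rw [hdv] at t1 ⊢
  linear_combination t1 + K * t2 + i1 + (m - c) / m * i2 - dd

end spatial

/-! ### Space-time smooth functions -/

def Sm {d : ℕ} (T : ℝ) (f : ℝ → (Fin d → ℝ) → ℝ) : Prop :=
  ContDiffOn ℝ (⊤ : ℕ∞) (fun p : ℝ × (Fin d → ℝ) => f p.1 p.2) (Set.Ioo 0 T ×ˢ Set.univ)

section spacetime
variable {d : ℕ} {T : ℝ} {f g : ℝ → (Fin d → ℝ) → ℝ}

lemma isOpen_dom : IsOpen (Set.Ioo 0 T ×ˢ (Set.univ : Set (Fin d → ℝ))) :=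
  isOpen_Ioo.prod isOpen_univ

lemma Sm.at (hf : Sm T f) {t : ℝ} (ht : t ∈ Set.Ioo 0 T) (x : Fin d → ℝ) :
    ContDiffAt ℝ (⊤ : ℕ∞) (fun p : ℝ × (Fin d → ℝ) => f p.1 p.2) (t, x) :=
  hf.contDiffAt (isOpen_dom.mem_nhds ⟨ht, Set.mem_univ _⟩)

lemma Sm.add (hf : Sm T f) (hg : Sm T g) : Sm T (fun s x => f s x + g s x) :=
  ContDiffOn.add hf hg

lemma Sm.mul (hf : Sm T f) (hg : Sm T g) : Sm T (fun s x => f s x * g s x) :=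
  ContDiffOn.mul hf hg

lemma Sm.const (a : ℝ) : Sm T (fun _ (_ : Fin d → ℝ) => a) := contDiffOn_const

lemma Sm.pow (hf : Sm T f) (n : ℕ) : Sm T (fun s x => f s x ^ n) := ContDiffOn.pow hf n

lemma Sm.sum {ι : Type*} [Fintype ι] {f : ι → ℝ → (Fin d → ℝ) → ℝ} (hf : ∀ i, Sm T (f i)) :
    Sm T (fun s x => ∑ i, f i s x) := ContDiffOn.sum fun i _ => hf i

lemma Sm.comp {G : ℝ → ℝ} (hf : Sm T f)
    (hG : ContDiffOn ℝ (⊤ : ℕ∞) G (Set.Ioi 0)) (hpos : ∀ s x, 0 < f s x) :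
    Sm T (fun s x => G (f s x)) :=
  ContDiffOn.comp hG hf (fun p _ => hpos p.1 p.2)

lemma Sm.slice (hf : Sm T f) {t : ℝ} (ht : t ∈ Set.Ioo 0 T) : ContDiff ℝ (⊤ : ℕ∞) (f t) := by
  rw [contDiff_iff_contDiffAt]
  intro x
  have h : ContDiffAt ℝ (⊤ : ℕ∞) (fun y : Fin d → ℝ => (t, y)) x :=
    contDiffAt_const.prodMk contDiffAt_id
  exact (hf.at ht x).comp x h

lemma Sm.congr (hf : Sm T f) (h : ∀ t ∈ Set.Ioo 0 T, ∀ x, g t x = f t x) : Sm T g :=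
  ContDiffOn.congr hf (fun p hp => h p.1 hp.1 p.2)

lemma Sm.pd_eq (hf : Sm T f) {t : ℝ} (ht : t ∈ Set.Ioo 0 T) (i : Fin d) (x : Fin d → ℝ) :
    pd i (f t) x = fderiv ℝ (fun p : ℝ × (Fin d → ℝ) => f p.1 p.2) (t, x)
      ((0 : ℝ), Pi.single i 1) := by
  have h1 := ((hf.at ht x).differentiableAt (by simp)).hasFDerivAt
  have h2 : HasFDerivAt (fun y : Fin d → ℝ => (t, y))
      ((0 : (Fin d → ℝ) →L[ℝ] ℝ).prod (ContinuousLinearMap.id ℝ _)) x :=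
    (hasFDerivAt_const t x).prodMk (hasFDerivAt_id x)
  have h3 := (h1.comp x h2).fderiv
  unfold pd
  have h4 : f t = (fun p : ℝ × (Fin d → ℝ) => f p.1 p.2) ∘ (fun y => (t, y)) := rfl
  rw [h4, h3]; simp

lemma Sm.dt_has (hf : Sm T f) {t : ℝ} (ht : t ∈ Set.Ioo 0 T) (x : Fin d → ℝ) :
    HasDerivAt (fun s => f s x) (fderiv ℝ (fun p : ℝ × (Fin d → ℝ) => f p.1 p.2) (t, x)
      ((1 : ℝ), 0)) t := by
  have h1 := ((hf.at ht x).differentiableAt (by simp)).hasFDerivAt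
  have h2 : HasDerivAt (fun s : ℝ => (s, x)) ((1 : ℝ), (0 : Fin d → ℝ)) t :=
    (hasDerivAt_id t).prodMk (hasDerivAt_const t x)
  exact h1.comp_hasDerivAt t h2

lemma Sm.hasDeriv (hf : Sm T f) {t : ℝ} (ht : t ∈ Set.Ioo 0 T) (x : Fin d → ℝ) :
    HasDerivAt (fun s => f s x) (deriv (fun s => f s x) t) t :=
  (hf.dt_has ht x).differentiableAt.hasDerivAt

lemma Sm.fderiv (hf : Sm T f) : ContDiffOn ℝ (⊤ : ℕ∞)
    (fderiv ℝ (fun p : ℝ × (Fin d → ℝ) => f p.1 p.2)) (Set.Ioo 0 T ×ˢ Set.univ) :=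
  ContDiffOn.fderiv_of_isOpen hf isOpen_dom (by simp)

lemma Sm.pd (hf : Sm T f) (i : Fin d) : Sm T (fun s x => pd i (f s) x) := by
  have h := hf.fderiv.clm_apply
    (contDiffOn_const (c := ((0 : ℝ), (Pi.single i 1 : Fin d → ℝ))))
  exact ContDiffOn.congr h (fun p hp => hf.pd_eq hp.1 i p.2)

lemma Sm.dt (hf : Sm T f) : Sm T (fun s x => deriv (fun r => f r x) s) := by
  have h := hf.fderiv.clm_apply
    (contDiffOn_const (c := ((1 : ℝ), (0 : Fin d → ℝ))))
  exact ContDiffOn.congr h (fun p hp => (hf.dt_has hp.1 p.2).deriv)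

lemma Sm.comm (hf : Sm T f) {t : ℝ} (ht : t ∈ Set.Ioo 0 T) (i : Fin d) (x : Fin d → ℝ) :
    deriv (fun s => _root_.pd i (f s) x) t
      = _root_.pd i (fun y => deriv (fun s => f s y) t) x := by
  rw [((hf.pd i).dt_has ht x).deriv, hf.dt.pd_eq ht i x]
  set q : ℝ × (Fin d → ℝ) → ℝ := fun p => f p.1 p.2 with hq
  have hd : DifferentiableAt ℝ (_root_.fderiv ℝ q) (t, x) :=
    (hf.fderiv.contDiffAt (isOpen_dom.mem_nhds ⟨ht, Set.mem_univ _⟩)).differentiableAt (by simp)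
  have hs : IsSymmSndFDerivAt ℝ q (t, x) := (hf.at ht x).isSymmSndFDerivAt two_le_top'
  have hev : ∀ᶠ p in nhds (t, x), p ∈ Set.Ioo 0 T ×ˢ (Set.univ : Set (Fin d → ℝ)) :=
    isOpen_dom.mem_nhds ⟨ht, Set.mem_univ _⟩
  have k1 : (fun p : ℝ × (Fin d → ℝ) => _root_.pd i (f p.1) p.2) =ᶠ[nhds (t, x)]
      fun p => _root_.fderiv ℝ q p ((0 : ℝ), Pi.single i 1) :=
    hev.mono fun p hp => hf.pd_eq hp.1 i p.2
  have k2 : (fun p : ℝ × (Fin d → ℝ) => deriv (fun s => f s p.2) p.1) =ᶠ[nhds (t, x)]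
      fun p => _root_.fderiv ℝ q p ((1 : ℝ), 0) :=
    hev.mono fun p hp => (hf.dt_has hp.1 p.2).deriv
  rw [k1.fderiv_eq, k2.fderiv_eq, fderiv_clm_apply hd (differentiableAt_const _),
    fderiv_clm_apply hd (differentiableAt_const _)]
  simp
  exact hs _ _

/-- differentiation under the integral sign. -/
lemma Sm.integral (hf : Sm T f) {t : ℝ} (ht : t ∈ Set.Ioo 0 T) :
    HasDerivAt (fun s => ∫ x in unitBox d, f s x)
      (∫ x in unitBox d, deriv (fun s => f s x) t) t := by
  obtain ⟨a, b, htab, hnb, hab⟩ : ∃ a b, t ∈ Set.Icc a b ∧ Set.Icc a b ∈ nhds t ∧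
      Set.Icc a b ⊆ Set.Ioo 0 T := by
    refine ⟨t / 2, (t + T) / 2, ⟨by linarith [ht.1], by linarith [ht.2]⟩,
      Icc_mem_nhds (by linarith [ht.1]) (by linarith [ht.2]), fun s hs => ⟨?_, ?_⟩⟩
    · linarith [ht.1, hs.1]
    · linarith [ht.2, hs.2]
  have hcpt : IsCompact (Set.Icc a b ×ˢ unitBox d) := isCompact_Icc.prod isCompact_Icc
  obtain ⟨C, hC⟩ := hcpt.exists_bound_of_continuousOn
    (f := fun p : ℝ × (Fin d → ℝ) => deriv (fun s => f s p.2) p.1)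
    ((ContDiffOn.continuousOn hf.dt).mono (Set.prod_mono hab (Set.subset_univ _)))
  have hm : MeasurableSet (unitBox d) := measurableSet_Icc
  refine (hasDerivAt_integral_of_dominated_loc_of_deriv_le (F := f)
    (F' := fun s x => deriv (fun r => f r x) s) (bound := fun _ => C) hnb ?_ ?_ ?_ ?_ ?_ ?_).2
  · filter_upwards [hnb] with s hs
    exact (hf.slice (hab hs)).continuous.aestronglyMeasurable
  · exact (hf.slice ht).continuous.continuousOn.integrableOn_compact isCompact_Icc
  · exact (hf.dt.slice ht).continuous.aestronglyMeasurable
  · exact (ae_restrict_iff' hm).2 (Filter.Eventually.of_forall fun x hx s hs => hC (s, x) ⟨hs, hx⟩)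
  · exact continuous_const.continuousOn.integrableOn_compact isCompact_Icc
  · exact Filter.Eventually.of_forall fun x s hs => hf.hasDeriv (hab hs) x

end spacetime

/-! ### The coefficient functions -/

lemma cd_rpow (a : ℝ) : ContDiffOn ℝ (⊤ : ℕ∞) (fun r : ℝ => r ^ a) (Set.Ioi 0) := fun r hr =>
  (Real.contDiffAt_rpow_const_of_ne (ne_of_gt hr)).contDiffWithinAt

lemma cd_hfun (ε γ : ℝ) : ContDiffOn ℝ (⊤ : ℕ∞) (hfun ε γ) (Set.Ioi 0) := by
  unfold hfun
  exact (contDiffOn_id.add (contDiffOn_const.mul (cd_rpow _))).add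
    (contDiffOn_const.mul (cd_rpow _))

lemma cd_deriv {G : ℝ → ℝ} (hG : ContDiffOn ℝ (⊤ : ℕ∞) G (Set.Ioi 0)) :
    ContDiffOn ℝ (⊤ : ℕ∞) (deriv G) (Set.Ioi 0) :=
  hG.deriv_of_isOpen isOpen_Ioi (by simp)

lemma cd_gfun (ε γ : ℝ) : ContDiffOn ℝ (⊤ : ℕ∞) (gfun ε γ) (Set.Ioi 0) := by
  unfold gfun
  exact (contDiffOn_id.mul (cd_deriv (cd_hfun ε γ))).sub (cd_hfun ε γ)

lemma cd_ptil (ε : ℝ) : ContDiffOn ℝ (⊤ : ℕ∞) (ptil ε) (Set.Ioi 0) := by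
  unfold ptil
  exact contDiffOn_const.mul ((cd_rpow _).add (cd_rpow _))

lemma cd_sqrt : ContDiffOn ℝ (⊤ : ℕ∞) Real.sqrt (Set.Ioi 0) := fun r hr =>
  (Real.contDiffAt_sqrt (ne_of_gt hr)).contDiffWithinAt

lemma muof_pos {ν κ : ℝ} (hκ : 0 < κ) (hνκ : κ < ν) : 0 < muof ν κ := by
  unfold muof
  have : Real.sqrt (ν ^ 2 - κ ^ 2) < ν := by
    rw [Real.sqrt_lt' (by linarith)]
    nlinarith
  linarith

section main
variable {d : ℕ}

/-- `h'(ρ) ∂ᵢ√ρ = (1/2) √ρ ∂ᵢφ(ρ)`. -/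
lemma sqrt_grad {ε γ : ℝ} {Φ : ℝ → ℝ} (hΦ : IsPhieps ε γ Φ) {R : (Fin d → ℝ) → ℝ} (hR : SP R)
    (hpos : ∀ x, 0 < R x) (i : Fin d) (x) :
    deriv (hfun ε γ) (R x) * pd i (fun y => Real.sqrt (R y)) x
      = (1 / 2) * (Real.sqrt (R x) * pd i (fun y => Φ (R y)) x) := by
  have hs : 0 < Real.sqrt (R x) := Real.sqrt_pos.2 (hpos x)
  rw [pd_comp i hR cd_sqrt hpos, pd_comp i hR hΦ.1 hpos, ← hΦ.2 _ (hpos x),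
    (Real.hasDerivAt_sqrt (hpos x).ne').deriv]
  generalize deriv Φ (R x) = q
  field_simp
  rw [Real.sq_sqrt (hpos x).le]
  ring

lemma Kvec_eq {ε γ : ℝ} {Φ : ℝ → ℝ} (hΦ : IsPhieps ε γ Φ) {R : (Fin d → ℝ) → ℝ} (hR : SP R)
    (hpos : ∀ x, 0 < R x) (i : Fin d) (x) :
    Kvec ε γ R x i = pd i (fun y => (1 / 2) * (deriv (hfun ε γ) (R y) *
        ∑ j, pd j (pd j (fun y => Φ (R y))) y)
        + (1 / 4) * ∑ j, pd j (fun y => Φ (R y)) y ^ 2) x := by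
  unfold Kvec grad
  congr 1
  funext y
  have hs : 0 < Real.sqrt (R y) := Real.sqrt_pos.2 (hpos y)
  have hsq : SP (fun y => Real.sqrt (R y)) := hR.comp cd_sqrt hpos
  have hφ : SP (fun y => Φ (R y)) := hR.comp hΦ.1 hpos
  have e : dvg (fun z => deriv (hfun ε γ) (R z) • fun i => pd i (fun w => Real.sqrt (R w)) z) y
      = ∑ j, (1 / 2) * (Real.sqrt (R y) * pd j (pd j (fun y => Φ (R y))) y
        + pd j (fun y => Real.sqrt (R y)) y * pd j (fun y => Φ (R y)) y) := by
    unfold dvg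
    refine Finset.sum_congr rfl fun j _ => ?_
    simp only [Pi.smul_apply, smul_eq_mul]
    rw [funext (fun z => sqrt_grad hΦ hR hpos j z), pd_cmul j _ (hsq.mul (hφ.pd j)),
      pd_mul j hsq (hφ.pd j)]
  rw [e]
  rw [div_eq_iff hs.ne', Finset.mul_sum, add_mul, Finset.mul_sum, Finset.mul_sum, Finset.mul_sum,
    Finset.sum_mul, Finset.sum_mul, ← Finset.sum_add_distrib]
  refine Finset.sum_congr rfl fun j _ => ?_
  have := sqrt_grad hΦ hR hpos j y
  linear_combination (1 / 2) * pd j (fun y => Φ (R y)) y * this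

end main

theorem statement9 (d : ℕ) (hd : 1 ≤ d) (ε γ ν κ T c : ℝ)
    (hε : 0 < ε) (hγ : 1 < γ) (hκ : 0 < κ) (hνκ : κ < ν) (hT : 0 < T)
    (hc0 : 0 < c) (hcμ : c < muof ν κ)
    (P Φ F : ℝ → ℝ) (hP : IsPeps ε γ ν κ P) (hΦ : IsPhieps ε γ Φ)
    (hF : IsFeps P F) (hFsmooth : ContDiffOn ℝ (⊤ : ℕ∞) F (Set.Ioi 0))
    (ρ : ℝ → (Fin d → ℝ) → ℝ) (u : ℝ → (Fin d → ℝ) → (Fin d → ℝ))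
    (hsol : IsQNSSol d ε γ ν κ T P ρ u)
    (v : ℝ → (Fin d → ℝ) → (Fin d → ℝ))
    (hv : ∀ s y i, v s y i = u s y i + c * grad (fun z => Φ (ρ s z)) y i) :
    ∀ t ∈ Set.Ioo 0 T,
      HasDerivAt (fun s => ∫ x in unitBox d,
          (ρ s x * (∑ i, v s x i ^ 2) / 2 + ρ s x ^ γ / (γ - 1)
            + (muof ν κ - c) / muof ν κ * F (ρ s x)
            + 2 * (c ^ 2 - 2 * ν * c + κ ^ 2) *
              ∑ i, (deriv (hfun ε γ) (ρ s x) * grad (fun z => Real.sqrt (ρ s z)) x i) ^ 2))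
        (-(c * ∫ x in unitBox d, hfun ε γ (ρ t x) * ∑ i, ∑ j, antiD (v t) x i j ^ 2)
          - (2 * ν - c) * (∫ x in unitBox d,
              (hfun ε γ (ρ t x) * ∑ i, ∑ j, symD (v t) x i j ^ 2
                + gfun ε γ (ρ t x) * dvg (v t) x ^ 2))
          - (∫ x in unitBox d, ptil ε (ρ t x) * ∑ i, v t x i ^ 2)
          - c * γ * (∫ x in unitBox d,
              deriv (hfun ε γ) (ρ t x) * (∑ i, grad (ρ t) x i ^ 2) * ρ t x ^ (γ - 2))
          - c * ((muof ν κ - c) / muof ν κ) * (∫ x in unitBox d,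
              deriv (hfun ε γ) (ρ t x) * (∑ i, grad (ρ t) x i ^ 2) * deriv (deriv F) (ρ t x))
          - c * (c ^ 2 - 2 * ν * c + κ ^ 2) * (∫ x in unitBox d,
              hfun ε γ (ρ t x) * ∑ i, ∑ j, hess (fun y => Φ (ρ t y)) x i j ^ 2)
          - c * (c ^ 2 - 2 * ν * c + κ ^ 2) * (∫ x in unitBox d,
              gfun ε γ (ρ t x) * lap (fun y => Φ (ρ t y)) x ^ 2)) t := by

  intro t ht
  obtain ⟨hρs, hus, hpos, hρp, hup, hcont, hmom⟩ := hsol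
  have hμ : 0 < muof ν κ := muof_pos hκ hνκ
  set m : ℝ := muof ν κ with hm
  set K : ℝ := c ^ 2 - 2 * ν * c + κ ^ 2 with hK
  -- space-time smoothness
  have hsub : Set.Ioo 0 T ×ˢ (Set.univ : Set (Fin d → ℝ)) ⊆ Set.Icc 0 T ×ˢ Set.univ :=
    Set.prod_mono Set.Ioo_subset_Icc_self subset_rfl
  have sρ : Sm T ρ := hρs.mono hsub
  have su : ∀ i, Sm T (fun s x => u s x i) := fun i =>
    (contDiffOn_pi.1 (hus.mono hsub)) i
  have sφ : Sm T (fun s x => Φ (ρ s x)) := sρ.comp hΦ.1 hpos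
  have sw : ∀ i, Sm T (fun s x => pd i (fun z => Φ (ρ s z)) x) := fun i => sφ.pd i
  have sv : ∀ i, Sm T (fun s x => v s x i) := fun i =>
    ((su i).add ((Sm.const c).mul (sw i))).congr (fun s _ x => hv s x i)
  have cP : ContDiffOn ℝ (⊤ : ℕ∞) P (Set.Ioi 0) :=
    ((contDiffOn_id.mul (cd_deriv hFsmooth)).sub hFsmooth).congr
      (fun r hr => (hF.2 r hr).symm)
  -- the energy density in a convenient form
  have sE : Sm T (fun s x => ρ s x * ((1 / 2) * ∑ i, v s x i ^ 2) + (1 / (γ - 1)) * ρ s x ^ γ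
      + (m - c) / m * F (ρ s x)
      + K * (ρ s x * ((1 / 2) * ∑ i, pd i (fun z => Φ (ρ s z)) x ^ 2))) :=
    (((sρ.mul ((Sm.const _).mul (Sm.sum fun i => (sv i).pow 2))).add
      ((Sm.const _).mul (sρ.comp (cd_rpow γ) hpos))).add
      ((Sm.const _).mul (sρ.comp hFsmooth hpos))).add
      ((Sm.const _).mul (sρ.mul ((Sm.const _).mul (Sm.sum fun i => (sw i).pow 2))))
  have hEeq : ∀ s ∈ Set.Ioo 0 T, ∀ x, (ρ s x * (∑ i, v s x i ^ 2) / 2 + ρ s x ^ γ / (γ - 1)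
            + (m - c) / m * F (ρ s x)
            + 2 * K *
              ∑ i, (deriv (hfun ε γ) (ρ s x) * grad (fun z => Real.sqrt (ρ s z)) x i) ^ 2)
      = ρ s x * ((1 / 2) * ∑ i, v s x i ^ 2) + (1 / (γ - 1)) * ρ s x ^ γ
      + (m - c) / m * F (ρ s x)
      + K * (ρ s x * ((1 / 2) * ∑ i, pd i (fun z => Φ (ρ s z)) x ^ 2)) := by
    intro s hs x
    have hR : SP (ρ s) := ⟨sρ.slice hs, hρp s⟩
    have : ∀ i, (deriv (hfun ε γ) (ρ s x) * grad (fun z => Real.sqrt (ρ s z)) x i) ^ 2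
        = (ρ s x / 4) * pd i (fun z => Φ (ρ s z)) x ^ 2 := by
      intro i
      unfold grad
      rw [sqrt_grad hΦ hR (hpos s)]
      have h2 := Real.sq_sqrt (hpos s x).le
      rw [mul_pow, mul_pow, h2]; ring
    simp only [this, ← Finset.mul_sum]
    ring
  have hder := sE.integral ht
  -- fixed time objects
  have hR : SP (ρ t) := ⟨sρ.slice ht, hρp t⟩
  have hU : ∀ i, SP (fun y => u t y i) := fun i =>
    ⟨(su i).slice ht, fun x n => by simp only [hup t x n]⟩
  have hφ : SP (fun y => Φ (ρ t y)) := hR.comp hΦ.1 (hpos t)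
  have hW : ∀ i, SP (pd i (fun y => Φ (ρ t y))) := fun i => hφ.pd i
  have hV : ∀ i, SP (fun y => v t y i) := by
    intro i
    rw [show (fun y => v t y i) = fun y => u t y i + c * pd i (fun z => Φ (ρ t z)) y from
      funext fun y => hv t y i]
    exact (hU i).add ((SP.const c).mul (hW i))
  have hH : SP (fun y => hfun ε γ (ρ t y)) := hR.comp (cd_hfun ε γ) (hpos t)
  have hH1 : SP (fun y => deriv (hfun ε γ) (ρ t y)) := hR.comp (cd_deriv (cd_hfun ε γ)) (hpos t)
  have hG : SP (fun y => gfun ε γ (ρ t y)) := hR.comp (cd_gfun ε γ) (hpos t)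
  have hB1 : SP (fun y => ρ t y ^ γ) := hR.comp (cd_rpow γ) (hpos t)
  have hA1 : SP (fun y => (1 / (γ - 1)) * ρ t y ^ γ) := (SP.const _).mul hB1
  have hA2 : SP (fun y => F (ρ t y)) := hR.comp hFsmooth (hpos t)
  have hB2 : SP (fun y => P (ρ t y)) := hR.comp cP (hpos t)
  have hF2 : SP (fun y => deriv (deriv F) (ρ t y)) :=
    hR.comp (cd_deriv (cd_deriv hFsmooth)) (hpos t)
  have hpt : SP (fun y => ptil ε (ρ t y)) := hR.comp (cd_ptil ε) (hpos t)
  have hRg : SP (fun y => ρ t y ^ (γ - 2)) := hR.comp (cd_rpow _) (hpos t)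
  have hsym : ∀ i j y, pd i (pd j (fun y => Φ (ρ t y))) y = pd j (pd i (fun y => Φ (ρ t y))) y :=
    fun i j y => pd_pd_comm i j hφ y
  have hWR : ∀ i y, ρ t y * pd i (fun y => Φ (ρ t y)) y
      = deriv (hfun ε γ) (ρ t y) * pd i (ρ t) y := by
    intro i y
    rw [pd_comp i hR hΦ.1 (hpos t), ← hΦ.2 _ (hpos t y)]; ring
  have hHd : ∀ i y, pd i (fun y => hfun ε γ (ρ t y)) y
      = deriv (hfun ε γ) (ρ t y) * pd i (ρ t) y := fun i y =>
    pd_comp i hR (cd_hfun ε γ) (hpos t) y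
  have hrt : ∀ x, deriv (fun s => ρ s x) t = - ∑ j, pd j (fun y => ρ t y * u t y j) x := by
    intro x
    have := hcont t ht x
    unfold dvg at this
    simp only [Pi.smul_apply, smul_eq_mul] at this
    linarith
  have hφt : ∀ y, deriv (fun s => Φ (ρ s y)) t
      = - ((∑ j, u t y j * pd j (fun y => Φ (ρ t y)) y)
        + deriv (hfun ε γ) (ρ t y) * ∑ j, pd j (fun z => u t z j) y) := by
    intro y
    have hd1 : HasDerivAt Φ (deriv Φ (ρ t y)) (ρ t y) :=
      ((hΦ.1.contDiffAt (Ioi_mem_nhds (hpos t y))).differentiableAt (by simp)).hasDerivAt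
    have := (hd1.comp t (sρ.hasDeriv ht y)).deriv
    simp only [Function.comp_def] at this
    rw [this, hrt y, mul_neg, Finset.mul_sum, Finset.mul_sum, ← Finset.sum_add_distrib]
    congr 1
    refine Finset.sum_congr rfl fun j _ => ?_
    rw [pd_mul j hR (hU j), pd_comp j hR hΦ.1 (hpos t), ← hΦ.2 _ (hpos t y)]
    ring
  have hwt : ∀ x i, deriv (fun s => pd i (fun z => Φ (ρ s z)) x) t
      = - pd i (fun y => (∑ j, u t y j * pd j (fun y => Φ (ρ t y)) y)
        + deriv (hfun ε γ) (ρ t y) * ∑ j, pd j (fun z => u t z j) y) x := by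
    intro x i
    rw [sφ.comm ht i x, funext hφt, pd_neg]
  have hB1d : ∀ i x, pd i (fun y => ρ t y ^ γ) x = γ * ρ t x ^ (γ - 1) * pd i (ρ t) x := by
    intro i x
    rw [pd_comp (G := fun r => r ^ γ) i hR (cd_rpow γ) (hpos t),
      (Real.hasDerivAt_rpow_const (Or.inl (hpos t x).ne')).deriv]
  have hpow1 : ∀ x, ρ t x ^ γ = ρ t x ^ (γ - 1) * ρ t x := by
    intro x
    rw [← Real.rpow_add_one (hpos t x).ne']; congr 1; ring
  have hpow2 : ∀ x, ρ t x ^ (γ - 1) = ρ t x ^ (γ - 2) * ρ t x := by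
    intro x
    rw [← Real.rpow_add_one (hpos t x).ne']; congr 1; ring
  have hB2p : ∀ i x, pd i (fun y => P (ρ t y)) x
      = m * (ptil ε (ρ t x) * pd i (fun y => Φ (ρ t y)) x) := by
    intro i x
    rw [pd_comp i hR cP (hpos t), (hP _ (hpos t x)).deriv]
    have h := hWR i x
    have hp := (hpos t x).ne'
    field_simp
    linear_combination (-m * ptil ε (ρ t x)) * h
  have hB2f : ∀ i x, pd i (fun y => P (ρ t y)) x
      = ρ t x * deriv (deriv F) (ρ t x) * pd i (ρ t) x := by
    intro i x
    have hF1 : SP (fun y => deriv F (ρ t y)) := hR.comp (cd_deriv hFsmooth) (hpos t)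
    rw [show (fun y => P (ρ t y)) = fun y => ρ t y * deriv F (ρ t y) - F (ρ t y) from
      funext fun y => (hF.2 _ (hpos t y)).symm, pd_sub i (hR.mul hF1) hA2, pd_mul i hR hF1,
      pd_comp i hR (cd_deriv hFsmooth) (hpos t), pd_comp i hR hFsmooth (hpos t)]
    ring
  have hγ1 : γ - 1 ≠ 0 := by linarith
  have key := fun x => pointwise ν κ c m hR hH hH1 hG hA1 hB1 hA2 hB2 hU hV hW
    (fun i y => hv t y i) (fun y => rfl) hHd (fun i y => (hWR i y).trans (hHd i y).symm) hsym x
    (deriv (fun s => ρ s x) t) ((1 / (γ - 1)) * (γ * ρ t x ^ (γ - 1))) (deriv F (ρ t x))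
    (ptil ε (ρ t x)) (fun i => deriv (fun s => u s x i) t)
    (fun i => deriv (fun s => pd i (fun z => Φ (ρ s z)) x) t)
    (hrt x) (hwt x)
    (fun j => by rw [pd_cmul j _ hB1, hB1d]; ring)
    (by simp only [hpow1 x]; field_simp)
    (fun j => pd_comp j hR hFsmooth (hpos t) x) (hF.2 _ (hpos t x))
    (fun j => hB2p j x) hμ.ne'
    (by
      intro i
      have h1 := hmom t ht x i
      have h2 : deriv (fun s => ρ s x * u s x i) t
          = deriv (fun s => ρ s x) t * u t x i + ρ t x * deriv (fun s => u s x i) t :=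
        ((sρ.hasDeriv ht x).mul ((su i).hasDeriv ht x)).deriv
      have h3 : grad (fun y => ρ t y ^ γ + P (ρ t y)) x i
          = pd i (fun y => ρ t y ^ γ) x + pd i (fun y => P (ρ t y)) x := pd_add i hB1 hB2 x
      have h4 := bohm (G := fun y => gfun ε γ (ρ t y)) hR hH hH1 hW (fun y => rfl) hHd
        (fun i y => (hWR i y).trans (hHd i y).symm) hsym x i
      rw [h2, h3, Kvec_eq hΦ hR (hpos t)] at h1
      rw [← h4]
      refine h1.trans ?_
      simp only [dvgM, grad, dvg, symD, jac]
      ring)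
  choose Xf hXf hXfs hk using key
  obtain ⟨X, hX⟩ : ∃ X, ∀ x, Xf x = X := ⟨Xf 0, fun x => (hXf x).trans (hXf 0).symm⟩
  have hXs : ∀ j, SP (X j) := by
    have := hXfs 0
    rwa [hX] at this
  simp only [hX] at hk
  have key2 := hk
  -- the time derivative of the energy density
  have hEt : ∀ x, deriv (fun s => ρ s x * ((1 / 2) * ∑ i, v s x i ^ 2)
      + (1 / (γ - 1)) * ρ s x ^ γ + (m - c) / m * F (ρ s x)
      + K * (ρ s x * ((1 / 2) * ∑ i, pd i (fun z => Φ (ρ s z)) x ^ 2))) t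
      = ∑ j, pd j (X j) x
        - c * (hfun ε γ (ρ t x) * ∑ i, ∑ j, antiD (v t) x i j ^ 2)
        - (2 * ν - c) * (hfun ε γ (ρ t x) * ∑ i, ∑ j, symD (v t) x i j ^ 2
                + gfun ε γ (ρ t x) * dvg (v t) x ^ 2)
        - ptil ε (ρ t x) * ∑ i, v t x i ^ 2
        - c * γ * (deriv (hfun ε γ) (ρ t x) * (∑ i, grad (ρ t) x i ^ 2) * ρ t x ^ (γ - 2))
        - c * ((m - c) / m) *
          (deriv (hfun ε γ) (ρ t x) * (∑ i, grad (ρ t) x i ^ 2) * deriv (deriv F) (ρ t x))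
        - c * K * (hfun ε γ (ρ t x) * ∑ i, ∑ j, hess (fun y => Φ (ρ t y)) x i j ^ 2)
        - c * K * (gfun ε γ (ρ t x) * lap (fun y => Φ (ρ t y)) x ^ 2) := by
    intro x
    have dρ := sρ.hasDeriv ht x
    have dw : ∀ i, HasDerivAt (fun s => pd i (fun z => Φ (ρ s z)) x)
      (deriv (fun s => pd i (fun z => Φ (ρ s z)) x) t) t := fun i => (sw i).hasDeriv ht x
    have dv : ∀ i, HasDerivAt (fun s => v s x i)
        (deriv (fun s => u s x i) t + c * deriv (fun s => pd i (fun z => Φ (ρ s z)) x) t) t := by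
      intro i
      rw [show (fun s => v s x i) = fun s => u s x i + c * pd i (fun z => Φ (ρ s z)) x from
        funext fun s => hv s x i]
      exact ((su i).hasDeriv ht x).add ((dw i).const_mul c)
    have dF : HasDerivAt (fun s => F (ρ s x)) (deriv F (ρ t x) * deriv (fun s => ρ s x) t) t :=
      (hF.1 _ (hpos t x)).hasDerivAt.comp t dρ
    have dg : HasDerivAt (fun s => ρ s x ^ γ)
        (γ * ρ t x ^ (γ - 1) * deriv (fun s => ρ s x) t) t :=
      HasDerivAt.comp (h₂ := fun r : ℝ => r ^ γ) t
        (Real.hasDerivAt_rpow_const (Or.inl (hpos t x).ne')) dρ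
    have dvs := HasDerivAt.fun_sum (u := Finset.univ) fun i _ => (dv i).fun_pow 2
    have dws := HasDerivAt.fun_sum (u := Finset.univ) fun i _ => (dw i).fun_pow 2
    have dall := (((dρ.fun_mul (dvs.const_mul (1 / 2))).fun_add (dg.const_mul (1 / (γ - 1)))).fun_add
      (dF.const_mul ((m - c) / m))).fun_add ((dρ.fun_mul (dws.const_mul (1 / 2))).const_mul K)
    rw [dall.deriv]
    have k := key2 x
    have c1 : c * ∑ i, pd i (fun y => Φ (ρ t y)) x * pd i (fun y => ρ t y ^ γ) x
        = c * γ * (deriv (hfun ε γ) (ρ t x) * (∑ i, grad (ρ t) x i ^ 2) * ρ t x ^ (γ - 2)) := by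
      rw [Finset.mul_sum (a := deriv (hfun ε γ) (ρ t x)), Finset.sum_mul,
        Finset.mul_sum, Finset.mul_sum]
      refine Finset.sum_congr rfl fun i _ => ?_
      rw [hB1d, hpow2 x]
      unfold grad
      linear_combination (c * γ * ρ t x ^ (γ - 2) * pd i (ρ t) x) * hWR i x
    have c2 : c * ((m - c) / m) *
          ∑ i, pd i (fun y => Φ (ρ t y)) x * pd i (fun y => P (ρ t y)) x
        = c * ((m - c) / m) *
          (deriv (hfun ε γ) (ρ t x) * (∑ i, grad (ρ t) x i ^ 2) * deriv (deriv F) (ρ t x)) := by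
      congr 1
      rw [Finset.mul_sum, Finset.sum_mul]
      refine Finset.sum_congr rfl fun i _ => ?_
      rw [hB2f]
      unfold grad
      linear_combination (deriv (deriv F) (ρ t x) * pd i (ρ t) x) * hWR i x
    rw [c1, c2] at k
    have s1 : ∀ (a b : Fin d → ℝ), ∑ i, ((2 : ℕ) : ℝ) * a i ^ (2 - 1) * b i
        = 2 * ∑ i, a i * b i := by
      intro a b
      rw [Finset.mul_sum]
      exact Finset.sum_congr rfl fun i _ => by push_cast; ring
    rw [s1, s1]
    simp only [antiD, symD, jac, dvg, hess, lap]
    linear_combination k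
  -- conclude
  have hint : ∀ {f : (Fin d → ℝ) → ℝ}, Continuous f → Integrable f (volume.restrict (unitBox d)) :=
    fun hf => hf.continuousOn.integrableOn_compact isCompact_Icc
  have hXint : ∫ x in unitBox d, ∑ j, pd j (X j) x = 0 := by
    rw [integral_finsetSum _ fun j _ => hint ((hXs j).pd j).cont]
    exact Finset.sum_eq_zero fun j _ => integral_pd_eq_zero (hXs j) j
  have hdj : ∀ i j, Continuous (fun x => jac (v t) x i j) := fun i j => ((hV i).pd j).cont
  have hcv : ∀ i, Continuous (fun x => v t x i) := fun i => (hV i).cont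
  have hcg : ∀ i, Continuous (fun x => grad (ρ t) x i) := fun i => (hR.pd i).cont
  have n0 : Continuous (fun x => ∑ j, pd j (X j) x) :=
    continuous_finsetSum _ fun j _ => ((hXs j).pd j).cont
  have hHc := hH.cont
  have hH1c := hH1.cont
  have hGc := hG.cont
  have hptc := hpt.cont
  have hRgc := hRg.cont
  have hF2c := hF2.cont
  have n1 : Continuous (fun x => hfun ε γ (ρ t x) * ∑ i, ∑ j, antiD (v t) x i j ^ 2) := by
    unfold antiD; fun_prop
  have hdc : Continuous (fun x => dvg (v t) x) :=
    continuous_finsetSum _ fun j _ => ((hV j).pd j).cont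
  have n2 : Continuous (fun x => hfun ε γ (ρ t x) * ∑ i, ∑ j, symD (v t) x i j ^ 2
                + gfun ε γ (ρ t x) * dvg (v t) x ^ 2) := by
    unfold symD; fun_prop
  have n3 : Continuous (fun x => ptil ε (ρ t x) * ∑ i, v t x i ^ 2) := by fun_prop
  have n4 : Continuous (fun x => deriv (hfun ε γ) (ρ t x) * (∑ i, grad (ρ t) x i ^ 2)
      * ρ t x ^ (γ - 2)) := 
    (hH1c.mul (continuous_finsetSum _ fun i _ => (hcg i).pow 2)).mul hRgc
  have n5 : Continuous (fun x => deriv (hfun ε γ) (ρ t x) * (∑ i, grad (ρ t) x i ^ 2)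
      * deriv (deriv F) (ρ t x)) :=
    (hH1c.mul (continuous_finsetSum _ fun i _ => (hcg i).pow 2)).mul hF2c
  have n6 : Continuous (fun x => hfun ε γ (ρ t x) *
      ∑ i, ∑ j, hess (fun y => Φ (ρ t y)) x i j ^ 2) :=
    hHc.mul (continuous_finsetSum _ fun i _ => continuous_finsetSum _ fun j _ =>
      ((hW j).pd i).cont.pow 2)
  have n7 : Continuous (fun x => gfun ε γ (ρ t x) * lap (fun y => Φ (ρ t y)) x ^ 2) :=
    hGc.mul ((continuous_finsetSum _ fun i _ => ((hW i).pd i).cont).pow 2)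
  have hev : ∀ᶠ s in nhds t, s ∈ Set.Ioo 0 T := Ioo_mem_nhds ht.1 ht.2
  refine (hder.congr_of_eventuallyEq (hev.mono fun s hs => ?_)).congr_deriv ?_
  · exact integral_congr_ae (Filter.Eventually.of_forall fun x => hEeq s hs x)
  · rw [integral_congr_ae (Filter.Eventually.of_forall hEt)]
    have i0 := hint n0
    have i1 := (hint n1).const_mul c
    have i2 := (hint n2).const_mul (2 * ν - c)
    have i3 := hint n3
    have i4 := (hint n4).const_mul (c * γ)
    have i5 := (hint n5).const_mul (c * ((m - c) / m))
    have i6 := (hint n6).const_mul (c * K)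
    have i7 := (hint n7).const_mul (c * K)
    have S : ∀ {f g : (Fin d → ℝ) → ℝ}, Integrable f (volume.restrict (unitBox d)) →
        Integrable g (volume.restrict (unitBox d)) →
        Integrable (fun x => f x - g x) (volume.restrict (unitBox d)) := fun a b => a.sub b
    rw [integral_sub (S (S (S (S (S (S i0 i1) i2) i3) i4) i5) i6) i7,
      integral_sub (S (S (S (S (S i0 i1) i2) i3) i4) i5) i6,
      integral_sub (S (S (S (S i0 i1) i2) i3) i4) i5,
      integral_sub (S (S (S i0 i1) i2) i3) i4,
      integral_sub (S (S i0 i1) i2) i3,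
      integral_sub (S i0 i1) i2,
      integral_sub i0 i1, hXint]
    simp only [integral_const_mul]
    ring

end
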